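/- Let f_0,…,f_d ∈ L with f_d ≠ 0, and let A ⊆ L \ {0} be a (possibly infinite) set such that N_{L/K} is injective on A. Then the set {α ∈ A : ker F_α ≠ {0}} is finite, and for every finite subset S ⊆ A one has Σ_{α ∈ S} dim_K(ker F_α) ≤ d. -/

import Mathlib

/-!
Put `φ_α(β) = α·θ(β)`. Then `φ_α^i = N_i(α)·θ^i`, so `F_α = f(φ_α)` for the skew polynomial
`f = ∑ f_i X^i` over `L`, with `X·c = θ(c)·X`. The bound is proved by induction on `d`.
If some `α₀ ∈ S` has `0 ≠ β₀ ∈ ker F_{α₀}`, let `γ = α₀·θ(β₀)/β₀`; right division gives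
`f = g·(X - γ)` (`exists_right_div`; the remainder kills `β₀`, hence vanishes), so
`F_α = G_α ∘ (φ_α - γ)` for all `α`. A nonzero `v` with `α·θ(v) = γ·v` forces
`N(α) = N(γ) = N(α₀)`, hence `α = α₀` by injectivity of the norm, and then `v/β₀` is fixed by `θ`,
i.e. `v ∈ K·β₀`. Thus the kernels of the `φ_α - γ` contribute at most one dimension in total, and
`g` has degree `d - 1` with the same leading coefficient. Finiteness follows from the bound applied
to `d + 1` elements with nonzero kernel.
-/

noncomputable section

open Finset

variable {K L : Type*} [Field K] [Field L] [Algebra K L]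

/-- The `i`-th truncated norm `N_i(y) = ∏_{j=0}^{i-1} θ^j(y)`. -/
def trunorm (θ : L ≃ₐ[K] L) (i : ℕ) (y : L) : L :=
  ∏ j ∈ Finset.range i, (θ ^ j) y

/-- The `K`-linear endomorphism `F_α : β ↦ ∑_{i<m} f_i·N_i(α)·θ^i(β)`. -/
def Fmap (θ : L ≃ₐ[K] L) (f : ℕ → L) (m : ℕ) (α : L) : L →ₗ[K] L :=
  ∑ i ∈ Finset.range m, (f i * trunorm θ i α) • (θ ^ i).toLinearMap

/-- The `θ`-semilinear operator `φ_α : β ↦ α·θ(β)`, for which `φ_α^i = N_i(α)·θ^i`. -/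
def semi (θ : L ≃ₐ[K] L) (α : L) : L →ₗ[K] L := α • θ.toLinearMap

lemma semi_apply (θ : L ≃ₐ[K] L) (α v : L) : semi θ α v = α * θ v := rfl

lemma semi_pow_apply (θ : L ≃ₐ[K] L) (α : L) (i : ℕ) (v : L) :
    (semi θ α ^ i) v = trunorm θ i α * (θ ^ i) v := by
  induction i generalizing v with
  | zero => simp [trunorm]
  | succ i ih =>
    rw [pow_succ, Module.End.mul_apply, ih, semi_apply, trunorm, trunorm, prod_range_succ,
      map_mul, pow_succ, AlgEquiv.mul_apply]
    ring

lemma semi_pow_mul (θ : L ≃ₐ[K] L) (α : L) (i : ℕ) (γ v : L) :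
    (semi θ α ^ i) (γ * v) = (θ ^ i) γ * (semi θ α ^ i) v := by
  rw [semi_pow_apply, semi_pow_apply, map_mul]
  ring

lemma Fmap_apply (θ : L ≃ₐ[K] L) (f : ℕ → L) (m : ℕ) (α v : L) :
    Fmap θ f m α v = ∑ i ∈ range m, f i * (semi θ α ^ i) v := by
  simp [Fmap, semi_pow_apply, LinearMap.sum_apply, mul_assoc]

/-- Right division of the skew polynomial `∑ f_i X^i` by `X - γ`, with quotient `g` and
remainder `r`, read through the action `X ↦ φ_α`; it is uniform in `α`. -/
lemma exists_right_div (θ : L ≃ₐ[K] L) (γ : L) (m : ℕ) (f : ℕ → L) :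
    ∃ (g : ℕ → L) (r : L), (∀ k, m = k + 1 → g k = f (k + 1)) ∧
      ∀ α v, Fmap θ f (m + 1) α v = Fmap θ g m α (semi θ α v - γ * v) + r * v := by
  induction m generalizing f with
  | zero => exact ⟨0, f 0, by simp, fun α v => by simp [Fmap_apply]⟩
  | succ m ih =>
    -- Subtracting `f_{m+1} X^m (X - γ)` cancels the top term and changes only the one below.
    obtain ⟨g, r, -, h⟩ := ih (Function.update f m (f m + f (m + 1) * (θ ^ m) γ))
    refine ⟨Function.update g m (f (m + 1)), r, ?_, fun α v => ?_⟩
    · rintro k hk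
      obtain rfl : m = k := by omega
      simp
    · have h := h α v
      simp only [Fmap_apply] at h ⊢
      have e : ∀ (u : ℕ → L) (c w : L),
          ∑ i ∈ range m, Function.update u m c i * (semi θ α ^ i) w
            = ∑ i ∈ range m, u i * (semi θ α ^ i) w := fun u c w =>
        sum_congr rfl fun i hi => by
          rw [Function.update_of_ne (by have := mem_range.1 hi; omega)]
      rw [sum_range_succ, e, Function.update_self] at h
      rw [sum_range_succ, sum_range_succ, sum_range_succ, e, Function.update_self,
        map_sub, semi_pow_mul, ← Module.End.mul_apply, ← pow_succ]
      linear_combination h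

lemma finrank_ker_comp_le' [FiniteDimensional K L] (G H : L →ₗ[K] L) :
    Module.finrank K (LinearMap.ker (G ∘ₗ H)) ≤
      Module.finrank K (LinearMap.ker G) + Module.finrank K (LinearMap.ker H) := by
  let T : LinearMap.ker (G ∘ₗ H) →ₗ[K] LinearMap.ker G :=
    H.restrict (fun x hx => by simpa using hx)
  have h1 := LinearMap.finrank_range_add_finrank_ker T
  have h2 := Submodule.finrank_le (LinearMap.range T)
  let J : LinearMap.ker T →ₗ[K] LinearMap.ker H :=
    ((LinearMap.ker (G ∘ₗ H)).subtype ∘ₗ (LinearMap.ker T).subtype).codRestrict _ (by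
      rintro ⟨x, hx⟩
      exact congrArg Subtype.val (LinearMap.mem_ker.1 hx))
  have hJ : Function.Injective J := by
    intro x y hxy
    have hval : (x : L) = (y : L) := congrArg (fun z : LinearMap.ker H => (z : L)) hxy
    exact Subtype.ext (Subtype.ext hval)
  have h3 := LinearMap.finrank_le_finrank_of_injective hJ
  omega

lemma trunorm_mul (θ : L ≃ₐ[K] L) (i : ℕ) (x y : L) :
    trunorm θ i (x * y) = trunorm θ i x * trunorm θ i y := by
  simp [trunorm, prod_mul_distrib]

lemma trunorm_ne_zero (θ : L ≃ₐ[K] L) (i : ℕ) {x : L} (hx : x ≠ 0) : trunorm θ i x ≠ 0 :=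
  prod_ne_zero_iff.2 fun j _ => (map_ne_zero (θ ^ j)).2 hx

lemma trunorm_map (θ : L ≃ₐ[K] L) {n : ℕ} (hθ : θ ^ n = 1) {x : L} (hx : x ≠ 0) :
    trunorm θ n (θ x) = trunorm θ n x := by
  have h := (prod_range_succ (fun j => (θ ^ j) x) n).symm.trans
    (prod_range_succ' (fun j => (θ ^ j) x) n)
  simp only [hθ, pow_zero, AlgEquiv.one_apply, pow_succ, AlgEquiv.mul_apply] at h
  exact (mul_right_cancel₀ hx h).symm

/-- Factoring out one root `γ = α₀·θ(β₀)/β₀` of `f` lowers `d` by one and costs a single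
dimension, since for `α ∈ S` the map `φ_α - γ` is injective if `α ≠ α₀` and has kernel `K·β₀` if
`α = α₀`. -/
lemma sum_finrank_ker_le (n : ℕ) [IsGalois K L] [FiniteDimensional K L]
    (hn : Module.finrank K L = n) (θ : L ≃ₐ[K] L)
    (hgen : ∀ σ : L ≃ₐ[K] L, σ ∈ Subgroup.zpowers θ)
    (S : Finset L) (hS0 : ∀ α ∈ S, α ≠ 0) (hinj : Set.InjOn (trunorm θ n) S)
    (d : ℕ) (f : ℕ → L) (hfd : f d ≠ 0) :
    ∑ α ∈ S, Module.finrank K (LinearMap.ker (Fmap θ f (d + 1) α)) ≤ d := by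
  classical
  have hθ : θ ^ n = 1 := by
    rw [← hn, ← IsGalois.card_aut_eq_finrank K L]
    exact pow_card_eq_one'
  have hfix : ∀ x : L, θ x = x → ∃ c : K, algebraMap K L c = x := by
    intro x hx
    refine (IsGalois.mem_range_algebraMap_iff_fixed x).2 fun σ => ?_
    have : Subgroup.zpowers θ ≤ MulAction.stabilizer (L ≃ₐ[K] L) x := by
      rw [Subgroup.zpowers_le]
      exact hx
    exact this (hgen σ)
  induction d generalizing f with
  | zero =>
    refine (sum_eq_zero fun α _ => ?_).le
    have : LinearMap.ker (Fmap θ f (0 + 1) α) = ⊥ := by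
      rw [LinearMap.ker_eq_bot']
      intro v hv
      simpa [Fmap_apply, hfd] using hv
    rw [this, finrank_bot]
  | succ d ih =>
    by_cases hall : ∀ α ∈ S, LinearMap.ker (Fmap θ f (d + 1 + 1) α) = ⊥
    · rw [sum_eq_zero fun α hα => by rw [hall α hα, finrank_bot]]
      exact Nat.zero_le _
    push Not at hall
    obtain ⟨α₀, hα₀, hker⟩ := hall
    obtain ⟨β₀, hβ₀, hβ0⟩ := Submodule.exists_mem_ne_zero_of_ne_bot hker
    obtain ⟨γ, hγ⟩ : ∃ γ, γ * β₀ = α₀ * θ β₀ := ⟨α₀ * θ β₀ / β₀, div_mul_cancel₀ _ hβ0⟩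
    obtain ⟨g, r, hg, hdiv⟩ := exists_right_div θ γ (d + 1) f
    have hr : r = 0 := by
      have := hdiv α₀ β₀
      rw [LinearMap.mem_ker.1 hβ₀, semi_apply, hγ, sub_self, map_zero, zero_add] at this
      exact (mul_eq_zero.1 this.symm).resolve_right hβ0
    subst hr
    let H : L → L →ₗ[K] L := fun α => semi θ α - LinearMap.mulLeft K γ
    have hcomp : ∀ α, Fmap θ f (d + 1 + 1) α = Fmap θ g (d + 1) α ∘ₗ H α := fun α => by
      ext v
      simp [hdiv, H]
    have hmem : ∀ α v, v ∈ LinearMap.ker (H α) ↔ α * θ v = γ * v := fun α v => by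
      simp [H, semi_apply, sub_eq_zero]
    have hnorm : ∀ α v, v ≠ 0 → α * θ v = γ * v → trunorm θ n α = trunorm θ n γ := by
      intro α v hv h
      have h := congrArg (trunorm θ n) h
      rw [trunorm_mul, trunorm_mul, trunorm_map θ hθ hv] at h
      exact mul_right_cancel₀ (trunorm_ne_zero θ n hv) h
    have hH : ∀ α ∈ S, Module.finrank K (LinearMap.ker (H α)) ≤ if α = α₀ then 1 else 0 := by
      intro α hα
      split_ifs with h
      · subst h
        have hθβ : θ β₀ ≠ 0 := by simpa using hβ0
        have hle : LinearMap.ker (H α) ≤ Submodule.span K {β₀} := by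
          intro v hv
          rw [hmem] at hv
          -- `θ(v)·β₀ = v·θ(β₀)`, so `v/β₀` is fixed by `θ`.
          have hfx : θ (v / β₀) = v / β₀ := by
            rw [map_div₀, div_eq_div_iff hθβ hβ0]
            refine mul_left_cancel₀ (hS0 α hα) ?_
            linear_combination β₀ * hv + v * hγ
          obtain ⟨c, hc⟩ := hfix _ hfx
          refine Submodule.mem_span_singleton.2 ⟨c, ?_⟩
          rw [Algebra.smul_def, hc, div_mul_cancel₀ _ hβ0]
        exact (Submodule.finrank_mono hle).trans (finrank_span_singleton hβ0).le
      · have : LinearMap.ker (H α) = ⊥ := by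
          rw [Submodule.eq_bot_iff]
          intro v hv
          by_contra hv0
          exact h (hinj hα hα₀ ((hnorm α v hv0 ((hmem α v).1 hv)).trans
            (hnorm α₀ β₀ hβ0 hγ.symm).symm))
        rw [this, finrank_bot]
    calc ∑ α ∈ S, Module.finrank K (LinearMap.ker (Fmap θ f (d + 1 + 1) α))
        ≤ ∑ α ∈ S, (Module.finrank K (LinearMap.ker (Fmap θ g (d + 1) α))
            + if α = α₀ then 1 else 0) := sum_le_sum fun α hα => by
          rw [hcomp]
          exact (finrank_ker_comp_le' _ _).trans (Nat.add_le_add_left (hH α hα) _)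
      _ ≤ d + 1 := by
          rw [sum_add_distrib, sum_ite_eq' S α₀, if_pos hα₀]
          exact Nat.add_le_add_right (ih g (by rwa [hg d rfl])) 1

theorem stmt_4 (n : ℕ) [IsGalois K L] [FiniteDimensional K L]
    (hn : Module.finrank K L = n) (θ : L ≃ₐ[K] L)
    (hgen : ∀ σ : L ≃ₐ[K] L, σ ∈ Subgroup.zpowers θ)
    (d : ℕ) (f : ℕ → L) (hfd : f d ≠ 0)
    (A : Set L) (hA0 : ∀ α ∈ A, α ≠ 0)
    (hinj : Set.InjOn (trunorm θ n) A) :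
    {α ∈ A | LinearMap.ker (Fmap θ f (d + 1) α) ≠ ⊥}.Finite ∧
      ∀ S : Finset L, ↑S ⊆ A →
        ∑ α ∈ S, Module.finrank K ↥(LinearMap.ker (Fmap θ f (d + 1) α)) ≤ d := by
  have hsum : ∀ S : Finset L, ↑S ⊆ A →
      ∑ α ∈ S, Module.finrank K ↥(LinearMap.ker (Fmap θ f (d + 1) α)) ≤ d := fun S hS =>
    sum_finrank_ker_le n hn θ hgen S (fun α hα => hA0 α (hS hα)) (hinj.mono hS) d f hfd
  refine ⟨?_, hsum⟩
  by_contra hinf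
  obtain ⟨S, hS, hcard⟩ := Set.Infinite.exists_subset_card_eq hinf (d + 1)
  have h1 : S.card • 1 ≤ ∑ α ∈ S, Module.finrank K ↥(LinearMap.ker (Fmap θ f (d + 1) α)) :=
    card_nsmul_le_sum _ _ _ fun α hα => Submodule.one_le_finrank_iff.2 (hS hα).2
  have h2 := hsum S fun α hα => (hS hα).1
  simp only [smul_eq_mul, mul_one] at h1
  omega
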